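/- Let k ≥ 2 be an integer and let N be a seminorm on ℝ^k such that N(e_i − e_j) ≤ 1 for all i ≠ j, where e_1, …, e_k are the standard basis vectors. Then for all x, y in the standard simplex Δ_k, N(x − y) ≤ (1/2)·∑_{i=1}^k |x_i − y_i|. (In words: among all norm-based relaxations in the simplex, half the L1 norm assigns the greatest length to every embedded edge.) -/

import Mathlib

/-!
Split the zero-sum vector `x - y` into positive and negative parts, which have the same total mass
`m = (1 / 2) * ∑ i, |x i - y i|`. Transporting mass from the negative to the positive part along
the product plan writes `m • (x - y)` as a combination of the differences `e_i - e_j` with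
nonnegative coefficients of total mass `m ^ 2`, supported off the diagonal. The triangle inequality
bounds its seminorm by `m ^ 2`, and dividing by `m` gives the claim (if
`m = 0`, then `x = y`).
-/

section WeightedSums

variable {ι κ E : Type*} [AddCommGroup E]

theorem sum_product_mul_smul_sub {R : Type*} [CommSemiring R] [Module R E]
    (s : Finset ι) (t : Finset κ) (a : ι → R) (b : κ → R) (p : ι → E) (q : κ → E) :
    ∑ ij ∈ s ×ˢ t, (a ij.1 * b ij.2) • (p ij.1 - q ij.2) =
      (∑ j ∈ t, b j) • ∑ i ∈ s, a i • p i - (∑ i ∈ s, a i) • ∑ j ∈ t, b j • q j := by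
  have first_marginal : ∑ ij ∈ s ×ˢ t, (a ij.1 * b ij.2) • p ij.1 =
      (∑ j ∈ t, b j) • ∑ i ∈ s, a i • p i := by
    rw [Finset.sum_product_right, Finset.sum_smul]
    simp only [Finset.smul_sum, smul_smul, mul_comm]
  have second_marginal : ∑ ij ∈ s ×ˢ t, (a ij.1 * b ij.2) • q ij.2 =
      (∑ i ∈ s, a i) • ∑ j ∈ t, b j • q j := by
    rw [Finset.sum_product, Finset.sum_smul]
    simp only [Finset.smul_sum, smul_smul]
  simp only [smul_sub, Finset.sum_sub_distrib, first_marginal, second_marginal]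

variable [Module ℝ E] (N : Seminorm ℝ E) {c : ℝ}

theorem seminorm_sum_smul_le {s : Finset ι} {w : ι → ℝ} {f : ι → E}
    (hw : ∀ i ∈ s, 0 ≤ w i) (hf : ∀ i ∈ s, w i ≠ 0 → N (f i) ≤ c) :
    N (∑ i ∈ s, w i • f i) ≤ (∑ i ∈ s, w i) * c := by
  calc N (∑ i ∈ s, w i • f i)
      ≤ ∑ i ∈ s, N (w i • f i) :=
        Finset.le_sum_of_subadditive N (map_zero N).le (map_add_le_add N) s _
    _ = ∑ i ∈ s, w i * N (f i) :=
        Finset.sum_congr rfl fun i hi => by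
          rw [map_smul_eq_mul, Real.norm_of_nonneg (hw i hi)]
    _ ≤ ∑ i ∈ s, w i * c := Finset.sum_le_sum fun i hi => by
        rcases eq_or_ne (w i) 0 with hwi | hwi
        · simp only [hwi, zero_mul, le_refl]
        · exact mul_le_mul_of_nonneg_left (hf i hi hwi) (hw i hi)
    _ = (∑ i ∈ s, w i) * c := (Finset.sum_mul ..).symm

theorem seminorm_sum_smul_sub_sum_smul_le {s : Finset ι} {t : Finset κ} {a : ι → ℝ} {b : κ → ℝ}
    {p : ι → E} {q : κ → E} (ha : ∀ i ∈ s, 0 ≤ a i) (hb : ∀ j ∈ t, 0 ≤ b j)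
    (hab : ∑ i ∈ s, a i = ∑ j ∈ t, b j)
    (hpq : ∀ i ∈ s, ∀ j ∈ t, a i ≠ 0 → b j ≠ 0 → N (p i - q j) ≤ c) :
    N (∑ i ∈ s, a i • p i - ∑ j ∈ t, b j • q j) ≤ (∑ i ∈ s, a i) * c := by
  set m := ∑ i ∈ s, a i with hm
  rcases (Finset.sum_nonneg ha).eq_or_lt with hm_zero | hm_pos
  · have ha_zero := (Finset.sum_eq_zero_iff_of_nonneg ha).1 hm_zero.symm
    have hb_zero := (Finset.sum_eq_zero_iff_of_nonneg hb).1 (hab.symm.trans hm_zero.symm)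
    have hp_zero : ∑ i ∈ s, a i • p i = 0 :=
      Finset.sum_eq_zero fun i hi => by rw [ha_zero i hi, zero_smul]
    have hq_zero : ∑ j ∈ t, b j • q j = 0 :=
      Finset.sum_eq_zero fun j hj => by rw [hb_zero j hj, zero_smul]
    rw [hp_zero, hq_zero, sub_zero, map_zero, hm, ← hm_zero, zero_mul]
  · refine le_of_mul_le_mul_left ?_ hm_pos
    calc m * N (∑ i ∈ s, a i • p i - ∑ j ∈ t, b j • q j)
        = N (m • (∑ i ∈ s, a i • p i - ∑ j ∈ t, b j • q j)) := by
          rw [map_smul_eq_mul, Real.norm_of_nonneg hm_pos.le]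
      _ = N (∑ ij ∈ s ×ˢ t, (a ij.1 * b ij.2) • (p ij.1 - q ij.2)) := by
          rw [sum_product_mul_smul_sub, ← hab, smul_sub]
      _ ≤ (∑ ij ∈ s ×ˢ t, a ij.1 * b ij.2) * c := by
          refine seminorm_sum_smul_le N (fun ij hij => ?_) (fun ij hij hne => ?_) <;>
            obtain ⟨hi, hj⟩ := Finset.mem_product.1 hij
          · exact mul_nonneg (ha _ hi) (hb _ hj)
          · exact hpq _ hi _ hj (left_ne_zero_of_mul hne) (right_ne_zero_of_mul hne)
      _ = m * (m * c) := by
          rw [Finset.sum_product, ← Finset.sum_mul_sum, ← hab, mul_assoc]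

end WeightedSums

theorem sum_posPart_eq_sum_negPart {ι α : Type*} [AddCommGroup α] [Lattice α] [AddLeftMono α]
    {s : Finset ι} {v : ι → α} (hv : ∑ i ∈ s, v i = 0) :
    ∑ i ∈ s, (v i)⁺ = ∑ i ∈ s, (v i)⁻ := by
  rw [← sub_eq_zero, ← Finset.sum_sub_distrib]
  simpa only [posPart_sub_negPart] using hv

theorem sum_posPart_eq_half_sum_abs {ι K : Type*} [Field K] [LinearOrder K] [IsStrictOrderedRing K]
    {s : Finset ι} {v : ι → K} (hv : ∑ i ∈ s, v i = 0) :
    ∑ i ∈ s, (v i)⁺ = (1 / 2) * ∑ i ∈ s, |v i| := by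
  simp only [← posPart_add_negPart (v _), Finset.sum_add_distrib,
    ← sum_posPart_eq_sum_negPart hv]
  ring

theorem seminorm_le_half_L1_general {ι E : Type*} [AddCommGroup E] [Module ℝ E]
    (N : Seminorm ℝ E) {s : Finset ι} {p : ι → E} {c : ℝ}
    (hp : (s : Set ι).Pairwise fun i j => N (p i - p j) ≤ c)
    {v : ι → ℝ} (hv : ∑ i ∈ s, v i = 0) :
    N (∑ i ∈ s, v i • p i) ≤ (1 / 2) * (∑ i ∈ s, |v i|) * c := by
  have jordan : ∑ i ∈ s, v i • p i = ∑ i ∈ s, (v i)⁺ • p i - ∑ i ∈ s, (v i)⁻ • p i := by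
    simp only [← Finset.sum_sub_distrib, ← sub_smul, posPart_sub_negPart]
  rw [jordan, ← sum_posPart_eq_half_sum_abs hv]
  refine seminorm_sum_smul_sub_sum_smul_le N (fun i _ => posPart_nonneg _)
    (fun j _ => negPart_nonneg _) (sum_posPart_eq_sum_negPart hv)
    fun i hi j hj hi_ne hj_ne => hp hi hj ?_
  rintro rfl
  exact (le_total (v i) 0).elim (hi_ne ∘ posPart_eq_zero.2) (hj_ne ∘ negPart_eq_zero.2)

/-- Among all seminorms `N` on `ℝ^k` with `N(e_i - e_j) ≤ 1` for `i ≠ j`,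
the value on the difference of two points of the standard simplex is at most half the
`L1` distance. -/
theorem seminorm_le_half_L1 (k : ℕ) (hk : 2 ≤ k) (N : Seminorm ℝ (Fin k → ℝ))
    (hN : ∀ i j : Fin k, i ≠ j → N (Pi.single i 1 - Pi.single j 1) ≤ 1)
    (x y : Fin k → ℝ) (hx : x ∈ stdSimplex ℝ (Fin k)) (hy : y ∈ stdSimplex ℝ (Fin k)) :
    N (x - y) ≤ (1 / 2) * ∑ i, |x i - y i| := by
  rw [pi_eq_sum_univ' (x - y), ← mul_one (_ * _)]
  exact seminorm_le_half_L1_general N (fun i _ j _ hij => hN i j hij) (by simp [hx.2, hy.2])
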